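/- Let ν = π/8 and let K(x) = (1/4)·[ e^{−|x|·cos ν}·cos(|x|·sin ν − ν) + e^{−|x|·sin ν}·sin(|x|·cos ν + ν) ]. Then ( ∫_ℝ K'(x)² dx ) / ( ∫_ℝ K(x)² dx ) = (5/7)·tan ν and ( ∫_ℝ K''(x)² dx ) / ( ∫_ℝ K(x)² dx ) = (3/7)·tan ν. Consequently, for any μ > 0 and c ∈ ℝ, the function x ↦ K((x−c)/μ) has Rayleigh quotients ∫|d/dx Item|²/∫|Item|² = (5/7)·μ^{-2}·tan ν and ∫|d²/dx² Item|²/∫|Item|² = (3/7)·μ^{-4}·tan ν. -/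

import Mathlib

/-!
On `x ≥ 0` the kernel is a sum of two damped oscillations, with characteristic roots
`e^{i(π-ν)}` and `e^{i(π/2+ν)}` and their conjugates, where `ν = π/8`. Differentiation therefore
just shifts phases, which gives all derivatives `G k` at once (`hasDerivAt_G`). They decay
exponentially and satisfy the fourth-order equation
`G₄ + q G₃ + r G₂ + q G₁ + G₀ = 0`, `q = 2(cos ν + sin ν)`, `r = 2 + 4 cos ν sin ν` (`G_ode`).

Multiplying this equation by `G₀, G₁, G₂, G₃` in turn and integrating by parts over `(0, ∞)` gives
four linear equations for the energies `I_k = ∫₀^∞ G_k²`, whose inhomogeneous terms involve only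
the values at `0`; the odd derivatives `G₁, G₃` vanish there. Solving the system yields
`I₀ = 7/(128 sin ν)`, `I₁ = 5/(128 cos ν)`, `I₂ = 3/(128 cos ν)` (`energies`). Evenness of the
kernel transfers these values to the whole line, and the dilated copies follow from the chain rule
and a linear change of variables.
-/

/-- The decaying fundamental solution of `d⁸/dx⁸ + 1` in closed form,
with `ν = π/8`. -/
noncomputable def Kker (x : ℝ) : ℝ :=
  (1 / 4) *
    (Real.exp (-|x| * Real.cos (Real.pi / 8)) *
        Real.cos (|x| * Real.sin (Real.pi / 8) - Real.pi / 8)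
      + Real.exp (-|x| * Real.sin (Real.pi / 8)) *
        Real.sin (|x| * Real.cos (Real.pi / 8) + Real.pi / 8))

open Real Set Filter Topology MeasureTheory

/-! ### The derivatives on the half-line and their differential equation -/

/-- The `k`-th derivative of the smooth function on `ℝ` that agrees with `Kker` on `[0, ∞)`. Each
derivative advances the phases by the arguments `π - π/8` and `π/2 + π/8` of the two
characteristic roots, which have modulus one. -/
noncomputable def G (k : ℕ) (x : ℝ) : ℝ :=
  (1 / 4) *
    (exp (-x * cos (π / 8)) * cos (x * sin (π / 8) - π / 8 + k * (π - π / 8))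
      + exp (-x * sin (π / 8)) * sin (x * cos (π / 8) + π / 8 + k * (π / 2 + π / 8)))

lemma hasDerivAt_G (k : ℕ) (x : ℝ) : HasDerivAt (G k) (G (k + 1) x) x := by
  have e1 : HasDerivAt (fun x : ℝ => exp (-x * cos (π / 8)))
      (exp (-x * cos (π / 8)) * (-1 * cos (π / 8))) x :=
    (((hasDerivAt_id x).neg).mul_const _).exp
  have e2 : HasDerivAt (fun x : ℝ => exp (-x * sin (π / 8)))
      (exp (-x * sin (π / 8)) * (-1 * sin (π / 8))) x :=
    (((hasDerivAt_id x).neg).mul_const _).exp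
  have c1 : HasDerivAt (fun x : ℝ => cos (x * sin (π / 8) - π / 8 + k * (π - π / 8)))
      (-sin (x * sin (π / 8) - π / 8 + k * (π - π / 8)) * (1 * sin (π / 8))) x :=
    ((((hasDerivAt_id x).mul_const _).sub_const _).add_const _).cos
  have c2 : HasDerivAt (fun x : ℝ => sin (x * cos (π / 8) + π / 8 + k * (π / 2 + π / 8)))
      (cos (x * cos (π / 8) + π / 8 + k * (π / 2 + π / 8)) * (1 * cos (π / 8))) x :=
    ((((hasDerivAt_id x).mul_const _).add_const _).add_const _).sin
  have h := ((e1.mul c1).add (e2.mul c2)).const_mul (1 / 4 : ℝ)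
  refine h.congr_deriv ?_
  have a1 : x * sin (π / 8) - π / 8 + ((k + 1 : ℕ) : ℝ) * (π - π / 8)
      = (x * sin (π / 8) - π / 8 + k * (π - π / 8)) + (π - π / 8) := by push_cast; ring
  have a2 : x * cos (π / 8) + π / 8 + ((k + 1 : ℕ) : ℝ) * (π / 2 + π / 8)
      = (x * cos (π / 8) + π / 8 + k * (π / 2 + π / 8)) + (π / 8 + π / 2) := by push_cast; ring
  unfold G
  rw [a1, a2, cos_add _ (π - π / 8), sin_add _ (π / 8 + π / 2), cos_pi_sub, sin_pi_sub,
    cos_add_pi_div_two, sin_add_pi_div_two]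
  ring

/-- Both oscillations satisfy a second-order recurrence in `k`; composing the two characteristic
factors gives the equation. -/
lemma G_ode (x : ℝ) :
    G 4 x + 2 * (cos (π / 8) + sin (π / 8)) * G 3 x
      + (2 + 4 * (cos (π / 8) * sin (π / 8))) * G 2 x
      + 2 * (cos (π / 8) + sin (π / 8)) * G 1 x + G 0 x = 0 := by
  have hu : ∀ (θ : ℝ) (k : ℕ), cos (θ + (k + 2 : ℕ) * (π - π / 8))
      = -2 * cos (π / 8) * cos (θ + (k + 1 : ℕ) * (π - π / 8))
        - cos (θ + k * (π - π / 8)) := by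
    intro θ k
    have a1 : θ + (k + 2 : ℕ) * (π - π / 8)
      = (θ + (k + 1 : ℕ) * (π - π / 8)) + (π - π / 8) := by push_cast; ring
    have a2 : θ + k * (π - π / 8)
      = (θ + (k + 1 : ℕ) * (π - π / 8)) - (π - π / 8) := by push_cast; ring
    rw [a1, a2, cos_add _ (π - π / 8), cos_sub _ (π - π / 8), cos_pi_sub, sin_pi_sub]
    ring
  have hv : ∀ (θ : ℝ) (k : ℕ), sin (θ + (k + 2 : ℕ) * (π / 2 + π / 8))
      = -2 * sin (π / 8) * sin (θ + (k + 1 : ℕ) * (π / 2 + π / 8))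
        - sin (θ + k * (π / 2 + π / 8)) := by
    intro θ k
    have a1 : θ + (k + 2 : ℕ) * (π / 2 + π / 8)
      = (θ + (k + 1 : ℕ) * (π / 2 + π / 8)) + (π / 8 + π / 2) := by push_cast; ring
    have a2 : θ + k * (π / 2 + π / 8)
      = (θ + (k + 1 : ℕ) * (π / 2 + π / 8)) - (π / 8 + π / 2) := by push_cast; ring
    rw [a1, a2, sin_add _ (π / 8 + π / 2), sin_sub _ (π / 8 + π / 2), cos_add_pi_div_two,
      sin_add_pi_div_two]
    ring
  unfold G
  rw [hu _ 2, hu _ 1, hu _ 0, hv _ 2, hv _ 1, hv _ 0]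
  simp only [zero_add]
  ring

/-! ### Relations at `π/8` and values at the origin -/

lemma cos_pos' : 0 < cos (π / 8) :=
  cos_pos_of_mem_Ioo ⟨by linarith [pi_pos], by linarith [pi_pos]⟩

lemma sin_pos' : 0 < sin (π / 8) :=
  sin_pos_of_pos_of_lt_pi (by linarith [pi_pos]) (by linarith [pi_pos])

/-- The algebraic relations in `ℚ(cos ν, sin ν)`, with `t = √2`, that solve the linear system
for the energies. -/
lemma trig_rel : ∃ t : ℝ, t ^ 2 = 2 ∧ cos (π / 8) ^ 2 = 1 / 2 + t / 4 ∧
    sin (π / 8) = (t - 1) * cos (π / 8) := by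
  have h2 : √2 ^ 2 = 2 := Real.sq_sqrt (by norm_num)
  have hc : cos (π / 8) ^ 2 = 1 / 2 + √2 / 4 := by
    rw [cos_sq, show 2 * (π / 8) = π / 4 by ring, cos_pi_div_four]; ring
  have hs : 2 * sin (π / 8) * cos (π / 8) = √2 / 2 := by
    rw [← sin_two_mul, show 2 * (π / 8) = π / 4 by ring, sin_pi_div_four]
  refine ⟨√2, h2, hc, ?_⟩
  apply mul_right_cancel₀ cos_pos'.ne'
  linear_combination hs / 2 - (√2 - 1) * hc - h2 / 4

lemma sin_le_cos' : sin (π / 8) ≤ cos (π / 8) := by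
  rw [← cos_pi_div_two_sub]
  exact cos_le_cos_of_nonneg_of_le_pi (by linarith [pi_pos]) (by linarith [pi_pos])
    (by linarith [pi_pos])

lemma G_zero_zero : G 0 0 = (cos (π / 8) + sin (π / 8)) / 4 := by
  simp [G]; ring

lemma G_one_zero : G 1 0 = 0 := by
  have h1 : -(π / 8) + (π - π / 8) = π - π / 4 := by ring
  have h2 : π / 8 + (π / 2 + π / 8) = π / 4 + π / 2 := by ring
  simp [G, h1, h2, cos_pi_sub, sin_add_pi_div_two]

lemma G_two_zero : G 2 0 = (sin (π / 8) - cos (π / 8)) / 4 := by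
  have h1 : -(π / 8) + 2 * (π - π / 8) = (π / 8 - π / 2) + 2 * π := by ring
  have h2 : π / 8 + 2 * (π / 2 + π / 8) = (π / 2 - π / 8) + π := by ring
  simp only [G, Nat.cast_ofNat, zero_mul, neg_zero, zero_sub, zero_add, exp_zero, h1, h2,
    cos_add_two_pi, sin_add_pi, cos_sub_pi_div_two, sin_pi_div_two_sub]
  ring

lemma G_three_zero : G 3 0 = 0 := by
  have h1 : -(π / 8) + 3 * (π - π / 8) = π / 2 + 2 * π := by ring
  have h2 : π / 8 + 3 * (π / 2 + π / 8) = 2 * π := by ring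
  simp only [G, Nat.cast_ofNat, zero_mul, neg_zero, zero_sub, zero_add, exp_zero, h1, h2,
    cos_add_two_pi, cos_pi_div_two, sin_two_pi]
  ring

/-! ### Exponential decay and integrability -/

lemma G_bound (k : ℕ) {x : ℝ} (hx : 0 ≤ x) : |G k x| ≤ exp (-sin (π / 8) * x) := by
  have h1 : exp (-x * cos (π / 8)) ≤ exp (-sin (π / 8) * x) := by
    apply exp_le_exp.2; nlinarith [sin_le_cos']
  have h2 : exp (-x * sin (π / 8)) = exp (-sin (π / 8) * x) := by congr 1; ring
  have h0 := exp_pos (-sin (π / 8) * x)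
  have A : |exp (-x * cos (π / 8)) * cos (x * sin (π / 8) - π / 8 + k * (π - π / 8))|
      ≤ exp (-sin (π / 8) * x) := by
    rw [abs_mul, abs_of_pos (exp_pos _)]
    calc _ ≤ exp (-x * cos (π / 8)) * 1 := by gcongr; exact abs_cos_le_one _
      _ ≤ _ := by simpa using h1
  have B : |exp (-x * sin (π / 8)) * sin (x * cos (π / 8) + π / 8 + k * (π / 2 + π / 8))|
      ≤ exp (-sin (π / 8) * x) := by
    rw [abs_mul, abs_of_pos (exp_pos _), h2]
    calc _ ≤ exp (-sin (π / 8) * x) * 1 := by gcongr; exact abs_sin_le_one _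
      _ = _ := by simp
  unfold G
  rw [abs_mul, abs_of_pos (by norm_num : (0 : ℝ) < 1 / 4)]
  have := abs_add_le (exp (-x * cos (π / 8)) * cos (x * sin (π / 8) - π / 8 + k * (π - π / 8)))
    (exp (-x * sin (π / 8)) * sin (x * cos (π / 8) + π / 8 + k * (π / 2 + π / 8)))
  linarith

lemma continuous_G (k : ℕ) : Continuous (G k) := by
  unfold G; fun_prop

lemma tendsto_G (k : ℕ) : Tendsto (G k) atTop (𝓝 0) := by
  have h : Tendsto (fun x : ℝ => exp (-sin (π / 8) * x)) atTop (𝓝 0) :=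
    tendsto_exp_atBot.comp (tendsto_id.const_mul_atTop_of_neg (by linarith [sin_pos']))
  refine squeeze_zero_norm' ?_ h
  filter_upwards [eventually_ge_atTop 0] with x hx using G_bound k hx

lemma integrable_GG (i j : ℕ) : IntegrableOn (fun x => G i x * G j x) (Ioi 0) := by
  have h : IntegrableOn (fun x : ℝ => exp (-sin (π / 8) * x)) (Ioi 0) :=
    exp_neg_integrableOn_Ioi 0 sin_pos'
  refine Integrable.mono' h
    ((continuous_G i).mul (continuous_G j)).aestronglyMeasurable ?_
  refine (ae_restrict_iff' measurableSet_Ioi).2 (Eventually.of_forall fun x hx => ?_)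
  have hx' : 0 ≤ x := le_of_lt hx
  rw [norm_mul]
  have h1 : exp (-sin (π / 8) * x) ≤ 1 := exp_le_one_iff.2 (by nlinarith [sin_pos'])
  calc ‖G i x‖ * ‖G j x‖ ≤ exp (-sin (π / 8) * x) * 1 :=
        mul_le_mul (G_bound i hx') ((G_bound j hx').trans h1) (norm_nonneg _) (exp_pos _).le
    _ = _ := mul_one _

/-! ### The linear system for the energies -/

/-- `P i j = ∫₀^∞ G_i G_j`. -/
noncomputable def P (i j : ℕ) : ℝ := ∫ x in Ioi (0 : ℝ), G i x * G j x

lemma P_comm (i j : ℕ) : P i j = P j i := by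
  simp only [P, mul_comm]

lemma P_parts (i j : ℕ) : P (i + 1) j + P i (j + 1) = -(G i 0 * G j 0) := by
  unfold P
  rw [← integral_add (integrable_GG _ _) (integrable_GG _ _)]
  have := integral_Ioi_of_hasDerivAt_of_tendsto' (a := (0 : ℝ)) (m := 0)
    (f := fun x => G i x * G j x)
    (f' := fun x => G (i + 1) x * G j x + G i x * G (j + 1) x)
    (fun x _ => (hasDerivAt_G i x).mul (hasDerivAt_G j x))
    ((integrable_GG _ _).add (integrable_GG _ _))
    (by simpa using (tendsto_G i).mul (tendsto_G j))
  rw [this]; ring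

/-- The equation `G_ode` paired with `G_j`. -/
lemma P_ode (j : ℕ) :
    P 4 j + 2 * (cos (π / 8) + sin (π / 8)) * P 3 j
      + (2 + 4 * (cos (π / 8) * sin (π / 8))) * P 2 j
      + 2 * (cos (π / 8) + sin (π / 8)) * P 1 j + P 0 j = 0 := by
  unfold P
  have I := fun i => integrable_GG i j
  simp only [← integral_const_mul]
  rw [← integral_add (I 4) ((I 3).const_mul _), ← integral_add _ ((I 2).const_mul _),
    ← integral_add _ ((I 1).const_mul _), ← integral_add _ (I 0)]
  · refine integral_eq_zero_of_ae (Eventually.of_forall fun x => ?_)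
    simp only [Pi.zero_apply]
    linear_combination G j x * G_ode x
  · exact (((I 4).add ((I 3).const_mul _)).add ((I 2).const_mul _)).add ((I 1).const_mul _)
  · exact ((I 4).add ((I 3).const_mul _)).add ((I 2).const_mul _)
  · exact (I 4).add ((I 3).const_mul _)

lemma energies : sin (π / 8) * P 0 0 = 7 / 128 ∧ cos (π / 8) * P 1 1 = 5 / 128 ∧
    cos (π / 8) * P 2 2 = 3 / 128 := by
  obtain ⟨t, ht, hc, hs⟩ := trig_rel
  have hc0 := cos_pos'
  have ht0 : t ≠ 0 := by rintro rfl; norm_num at ht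
  have o0 := P_ode 0
  have o1 := P_ode 1
  have o2 := P_ode 2
  have o3 := P_ode 3
  have p00 := P_parts 0 0
  have p01 := P_parts 0 1
  have p02 := P_parts 0 2
  have p03 := P_parts 0 3
  have p11 := P_parts 1 1
  have p12 := P_parts 1 2
  have p13 := P_parts 1 3
  have p22 := P_parts 2 2
  have p23 := P_parts 2 3
  have p33 := P_parts 3 3
  simp only [Nat.reduceAdd, zero_add, G_zero_zero, G_one_zero, G_two_zero, G_three_zero,
    P_comm 1 0, P_comm 2 0, P_comm 3 0, P_comm 4 0, P_comm 2 1, P_comm 3 1, P_comm 4 1,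
    P_comm 3 2, P_comm 4 2, P_comm 4 3, mul_zero, zero_mul, neg_zero]
    at o0 o1 o2 o3 p00 p01 p02 p03 p11 p12 p13 p22 p23 p33
  rw [hs] at *
  set c := cos (π / 8)
  have hcs : c * ((t - 1) * c) = t / 4 := by
    linear_combination (t - 1) * hc + ht / 4
  rw [hcs] at o0 o1 o2 o3
  -- Here `cos ν + sin ν = t cos ν`; the off-diagonal products reduce to boundary values.
  have q01 : P 0 1 = -(t * c / 4) ^ 2 / 2 := by linear_combination p00 / 2
  have q12 : P 1 2 = 0 := by linarith
  have q23 : P 2 3 = -((t - 2) * c / 4) ^ 2 / 2 := by linear_combination p22 / 2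
  have q34 : P 3 4 = 0 := by linarith
  have q02 : P 0 2 = -P 1 1 := by linarith
  have q13 : P 1 3 = -P 2 2 := by linarith
  have q24 : P 2 4 = -P 3 3 := by linarith
  have q03 : P 0 3 = -(t * c / 4 * ((t - 2) * c / 4)) := by
    linear_combination p02 - q12
  have q04 : P 0 4 = P 2 2 := by linarith
  have q14 : P 1 4 = -P 2 3 := by linarith
  rw [q04, q03, q02, q01] at o0
  rw [q14, q13, q12, q01, q23] at o1
  rw [q24, q23, q12, q02] at o2
  rw [q34, q23, q13, q03] at o3
  have d12 : c * (P 1 1 - P 2 2) = 1 / 64 := by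
    apply mul_left_cancel₀ ht0
    grind
  have e2 : c * P 2 2 = 3 / 128 := by
    grind
  have e1 : c * P 1 1 = 5 / 128 := by linarith
  refine ⟨?_, e1, e2⟩
  grind

/-! ### From the half-line to the line -/

lemma Kker_eq (x : ℝ) : Kker x = G 0 |x| := by
  simp [Kker, G]

lemma deriv_Kker_pos {x : ℝ} (hx : 0 < x) : deriv Kker x = G 1 x := by
  have : Kker =ᶠ[𝓝 x] G 0 := by
    filter_upwards [lt_mem_nhds hx] with y hy
    rw [Kker_eq, abs_of_pos hy]
  rw [this.deriv_eq, (hasDerivAt_G 0 x).deriv]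

lemma deriv2_Kker_pos {x : ℝ} (hx : 0 < x) : deriv (deriv Kker) x = G 2 x := by
  have : deriv Kker =ᶠ[𝓝 x] G 1 := by
    filter_upwards [lt_mem_nhds hx] with y hy using deriv_Kker_pos hy
  rw [this.deriv_eq, (hasDerivAt_G 1 x).deriv]

lemma deriv_Kker_neg (x : ℝ) : deriv Kker (-x) = -deriv Kker x := by
  have h : (fun y => Kker (-y)) = Kker := by
    ext y; simp [Kker_eq]
  have := deriv_comp_neg Kker x
  rw [h] at this
  linarith

lemma deriv2_Kker_neg (x : ℝ) : deriv (deriv Kker) (-x) = deriv (deriv Kker) x := by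
  have h : (fun y => deriv Kker (-y)) = fun y => -deriv Kker y := by
    ext y; exact deriv_Kker_neg y
  have := deriv_comp_neg (deriv Kker) x
  rw [h, deriv.fun_neg] at this
  linarith

/-- An even function equal to `G k ^ 2` on the positive half-line has twice its energy. The value
at `0` is irrelevant. -/
lemma integral_even (k : ℕ) (f : ℝ → ℝ) (hpos : ∀ x, 0 < x → f x = G k x ^ 2)
    (heven : ∀ x, f (-x) = f x) : ∫ x, f x = 2 * P k k := by
  have h : ∀ x, f x = f |x| := by
    intro x
    rcases abs_choice x with h | h <;> rw [h]
    rw [heven]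
  calc ∫ x, f x = ∫ x, f |x| := integral_congr_ae (Eventually.of_forall h)
    _ = 2 * ∫ x in Ioi (0 : ℝ), f x := integral_comp_abs
    _ = 2 * P k k := by
      congr 1
      exact setIntegral_congr_fun measurableSet_Ioi fun x hx => by
        simp only [hpos x hx, sq]

lemma integral_K0 : ∫ x, Kker x ^ 2 = 2 * P 0 0 :=
  integral_even 0 _ (fun x hx => by simp only [Kker_eq, abs_of_pos hx])
    (fun x => by simp only [Kker_eq, abs_neg])

lemma integral_K1 : ∫ x, deriv Kker x ^ 2 = 2 * P 1 1 :=
  integral_even 1 _ (fun x hx => by simp only [deriv_Kker_pos hx])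
    (fun x => by simp only [deriv_Kker_neg, neg_sq])

lemma integral_K2 : ∫ x, deriv (deriv Kker) x ^ 2 = 2 * P 2 2 :=
  integral_even 2 _ (fun x hx => by simp only [deriv2_Kker_pos hx])
    (fun x => by simp only [deriv2_Kker_neg])

/-! ### Translated and dilated copies -/

/-- No differentiability of `f` is needed: for `μ ≠ 0` both derivatives take their junk value
together, and for `μ = 0` both sides vanish. -/
lemma deriv_item (f : ℝ → ℝ) (μ c : ℝ) :
    deriv (fun y => f ((y - c) / μ)) = fun x => μ⁻¹ * deriv f ((x - c) / μ) := by
  ext x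
  have h1 := deriv_comp_sub_const (f := fun z => f (z / μ)) (x := x) (a := c)
  have h2 := deriv_comp_mul_left μ⁻¹ f (x - c)
  simp only [div_eq_inv_mul, smul_eq_mul] at *
  rw [h1, h2]

lemma integral_item (f : ℝ → ℝ) {μ : ℝ} (hμ : 0 < μ) (c : ℝ) :
    ∫ x, f ((x - c) / μ) = μ * ∫ x, f x := by
  rw [integral_sub_right_eq_self (fun x => f (x / μ)) c, Measure.integral_comp_div, abs_of_pos hμ,
    smul_eq_mul]

/-- Rayleigh quotients of the kernel `K` and of its translated/dilated copies:
`∫K'²/∫K² = (5/7)tan ν`, `∫K''²/∫K² = (3/7)tan ν` (with `ν = π/8`), and for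
`Item(x) = K((x−c)/μ)` the corresponding quotients are `(5/7)μ⁻²tan ν` and
`(3/7)μ⁻⁴tan ν`. -/
theorem stmt16 :
    (∫ x : ℝ, (deriv Kker x) ^ 2) / (∫ x : ℝ, (Kker x) ^ 2)
        = (5 / 7) * Real.tan (Real.pi / 8) ∧
    (∫ x : ℝ, (deriv (deriv Kker) x) ^ 2) / (∫ x : ℝ, (Kker x) ^ 2)
        = (3 / 7) * Real.tan (Real.pi / 8) ∧
    ∀ μ : ℝ, 0 < μ → ∀ c : ℝ,
      (∫ x : ℝ, (deriv (fun y => Kker ((y - c) / μ)) x) ^ 2) /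
          (∫ x : ℝ, (Kker ((x - c) / μ)) ^ 2)
        = (5 / 7) * μ ^ (-(2 : ℤ)) * Real.tan (Real.pi / 8) ∧
      (∫ x : ℝ, (deriv (deriv (fun y => Kker ((y - c) / μ))) x) ^ 2) /
          (∫ x : ℝ, (Kker ((x - c) / μ)) ^ 2)
        = (3 / 7) * μ ^ (-(4 : ℤ)) * Real.tan (Real.pi / 8) := by
  obtain ⟨e0, e1, e2⟩ := energies
  have hc := cos_pos'
  have hs := sin_pos'
  have i0 : ∫ x, Kker x ^ 2 = 7 / (64 * sin (π / 8)) := by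
    rw [integral_K0, eq_div_iff (by positivity)]; linarith
  have i1 : ∫ x, deriv Kker x ^ 2 = 5 / (64 * cos (π / 8)) := by
    rw [integral_K1, eq_div_iff (by positivity)]; linarith
  have i2 : ∫ x, deriv (deriv Kker) x ^ 2 = 3 / (64 * cos (π / 8)) := by
    rw [integral_K2, eq_div_iff (by positivity)]; linarith
  refine ⟨?_, ?_, fun μ hμ c => ⟨?_, ?_⟩⟩
  · rw [i0, i1, tan_eq_sin_div_cos]; field_simp
  · rw [i0, i2, tan_eq_sin_div_cos]; field_simp
  · rw [deriv_item, integral_item (fun x => Kker x ^ 2) hμ c,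
      integral_item (fun x => (μ⁻¹ * deriv Kker x) ^ 2) hμ c]
    simp only [mul_pow, integral_const_mul]
    rw [i0, i1, tan_eq_sin_div_cos, zpow_neg]
    field_simp
  · have h : deriv (deriv (fun y => Kker ((y - c) / μ)))
        = fun x => μ⁻¹ * (μ⁻¹ * deriv (deriv Kker) ((x - c) / μ)) := by
      rw [deriv_item]
      ext x
      rw [deriv_const_mul_field, deriv_item]
    rw [h, integral_item (fun x => Kker x ^ 2) hμ c,
      integral_item (fun x => (μ⁻¹ * (μ⁻¹ * deriv (deriv Kker) x)) ^ 2) hμ c]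
    simp only [mul_pow, integral_const_mul]
    rw [i0, i2, tan_eq_sin_div_cos, zpow_neg]
    field_simp
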